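/- For all real parameters a > 0, b > 1, T > 0: (i) G_{a,b,T}(s_n(b,T)) = 0 for every integer n ≥ 0; (ii) for every odd integer n ≥ 1, the maximum of G_{a,b,T} over [s_{n−1}(b,T), s_n(b,T)] equals a·T·b^{n−1} and is attained at χ = s_{n−1}(b,T) + (π/2)·T·b^{n−1}; (iii) for every even integer n ≥ 2, the minimum of G_{a,b,T} over [s_{n−1}(b,T), s_n(b,T)] equals −a·T·b^{n−1} and is attained at χ = s_{n−1}(b,T) + (π/2)·T·b^{n−1}. -/

import Mathlib

open Real Filter Set

/-- Breakpoints `s_n(b,T) = T·π·(b^n − 1)/(b − 1)`. -/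
noncomputable def brk (b T : ℝ) (n : ℕ) : ℝ := T * Real.pi * (b ^ n - 1) / (b - 1)

/-- Index of the segment containing `x ≥ 0`: the unique `m` with `s_m ≤ x < s_{m+1}`
(for `b > 1`, `T > 0`). -/
noncomputable def seg (b T x : ℝ) : ℕ := sInf {n : ℕ | x < brk b T (n + 1)}

/-- The saturated Nussbaum function `N_{a,b,T}`: on `[s_{n−1}, s_n)` (with `m = n − 1`)
it equals `(−1)^m·a·cos((χ − s_m)/(b^m·T))`, extended evenly to `χ < 0`. -/
noncomputable def satN (a b T : ℝ) (χ : ℝ) : ℝ :=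
  (-1 : ℝ) ^ (seg b T |χ|) * a *
    Real.cos ((|χ| - brk b T (seg b T |χ|)) / (b ^ (seg b T |χ|) * T))

/-- The integrated function `G_{a,b,T}(χ) = ∫_0^χ N_{a,b,T}(τ) dτ`. -/
noncomputable def satG (a b T : ℝ) (χ : ℝ) : ℝ := ∫ τ in (0:ℝ)..χ, satN a b T τ

lemma brk_succ (b T : ℝ) (hb : 1 < b) (n : ℕ) :
    brk b T (n + 1) = brk b T n + Real.pi * (b ^ n * T) := by
  have : b - 1 ≠ 0 := by linarith
  unfold brk
  field_simp
  ring

lemma brk_zero (b T : ℝ) : brk b T 0 = 0 := by simp [brk]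

lemma brk_mono (b T : ℝ) (hb : 1 < b) (hT : 0 < T) : StrictMono (brk b T) := by
  apply strictMono_nat_of_lt_succ
  intro n
  rw [brk_succ b T hb]
  have : 0 < Real.pi * (b ^ n * T) := by positivity
  linarith

lemma seg_eq (b T : ℝ) (hb : 1 < b) (hT : 0 < T) (n : ℕ) (x : ℝ)
    (h1 : brk b T n ≤ x) (h2 : x < brk b T (n + 1)) : seg b T x = n := by
  unfold seg
  apply le_antisymm
  · exact Nat.sInf_le h2
  · apply le_csInf ⟨n, h2⟩
    intro m hm
    have hm' : brk b T n < brk b T (m + 1) := lt_of_le_of_lt h1 hm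
    have := (brk_mono b T hb hT).lt_iff_lt.1 hm'
    omega

lemma seg_integral (a b T : ℝ) (hb : 1 < b) (hT : 0 < T) (n : ℕ) (x : ℝ)
    (h1 : brk b T n ≤ x) (h2 : x ≤ brk b T (n + 1)) :
    IntervalIntegrable (satN a b T) MeasureTheory.volume (brk b T n) x ∧
    ∫ τ in (brk b T n)..x, satN a b T τ =
      (-1 : ℝ) ^ n * (a * T * b ^ n) * Real.sin ((x - brk b T n) / (b ^ n * T)) := by
  have hc : b ^ n * T ≠ 0 := by positivity
  have h0 : 0 ≤ brk b T n := by
    rw [← brk_zero b T]; exact (brk_mono b T hb hT).monotone (Nat.zero_le n)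
  have heq : Set.EqOn (fun τ => (-1 : ℝ) ^ n * a * Real.cos ((τ - brk b T n) / (b ^ n * T)))
      (satN a b T) (Set.uIoo (brk b T n) x) := by
    intro τ hτ
    rw [Set.uIoo_of_le h1] at hτ
    have hs := seg_eq b T hb hT n τ hτ.1.le (lt_of_lt_of_le hτ.2 h2)
    have habs : |τ| = τ := abs_of_nonneg (h0.trans hτ.1.le)
    simp only [satN, habs, hs]
  have hcont : Continuous
      (fun τ => (-1 : ℝ) ^ n * a * Real.cos ((τ - brk b T n) / (b ^ n * T))) := by fun_prop
  refine ⟨(hcont.intervalIntegrable _ _).congr_uIoo heq, ?_⟩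
  rw [← intervalIntegral.integral_congr_uIoo heq]
  rw [intervalIntegral.integral_eq_sub_of_hasDerivAt
    (f := fun τ => (-1 : ℝ) ^ n * (a * T * b ^ n) * Real.sin ((τ - brk b T n) / (b ^ n * T)))
    _ (hcont.intervalIntegrable _ _)]
  · simp
  · intro τ _
    have h := ((((hasDerivAt_id' τ).sub_const (brk b T n)).div_const (b ^ n * T)).sin).const_mul
      ((-1 : ℝ) ^ n * (a * T * b ^ n))
    refine h.congr_deriv ?_
    have hb0 : b ^ n ≠ 0 := by positivity
    field_simp

lemma satG_brk (a b T : ℝ) (hb : 1 < b) (hT : 0 < T) (n : ℕ) :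
    IntervalIntegrable (satN a b T) MeasureTheory.volume 0 (brk b T n) ∧
    satG a b T (brk b T n) = 0 := by
  induction n with
  | zero => simp [brk_zero, satG]
  | succ n ih =>
    have h := seg_integral a b T hb hT n (brk b T (n + 1))
      ((brk_mono b T hb hT).monotone (Nat.le_succ n)) le_rfl
    refine ⟨ih.1.trans h.1, ?_⟩
    have hc : b ^ n * T ≠ 0 := by positivity
    have ih2 := ih.2
    unfold satG at ih2 ⊢
    rw [← intervalIntegral.integral_add_adjacent_intervals ih.1 h.1, ih2, h.2, brk_succ b T hb,
      add_sub_cancel_left, mul_div_cancel_right₀ _ hc]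
    simp

lemma satG_eq (a b T : ℝ) (hb : 1 < b) (hT : 0 < T) (n : ℕ) (x : ℝ)
    (h1 : brk b T n ≤ x) (h2 : x ≤ brk b T (n + 1)) :
    satG a b T x =
      (-1 : ℝ) ^ n * (a * T * b ^ n) * Real.sin ((x - brk b T n) / (b ^ n * T)) := by
  have h := seg_integral a b T hb hT n x h1 h2
  have ih := satG_brk a b T hb hT n
  have ih2 := ih.2
  unfold satG at ih2 ⊢
  rw [← intervalIntegral.integral_add_adjacent_intervals ih.1 h.1, ih2, h.2, zero_add]

lemma mid_mem (b T : ℝ) (hb : 1 < b) (hT : 0 < T) (n : ℕ) :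
    brk b T n + (Real.pi / 2) * T * b ^ n ∈ Set.Icc (brk b T n) (brk b T (n + 1)) := by
  have : 0 < Real.pi * (b ^ n * T) := by positivity
  constructor
  · nlinarith
  · rw [brk_succ b T hb]; nlinarith

lemma satG_mid (a b T : ℝ) (hb : 1 < b) (hT : 0 < T) (n : ℕ) :
    satG a b T (brk b T n + (Real.pi / 2) * T * b ^ n) = (-1 : ℝ) ^ n * (a * T * b ^ n) := by
  have hm := mid_mem b T hb hT n
  have hc : b ^ n * T ≠ 0 := by positivity
  rw [satG_eq a b T hb hT n _ hm.1 hm.2]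
  have : (brk b T n + (Real.pi / 2) * T * b ^ n - brk b T n) / (b ^ n * T) = Real.pi / 2 := by
    rw [div_eq_iff hc]; ring
  rw [this, Real.sin_pi_div_two, mul_one]

/-- (i) `G` vanishes at breakpoints; (ii) on odd segments its maximum is
`a·T·b^{n−1}`, attained at the midpoint; (iii) on even segments its minimum is
`−a·T·b^{n−1}`, attained at the midpoint. -/
theorem satG_extrema (a b T : ℝ) (ha : 0 < a) (hb : 1 < b) (hT : 0 < T) :
    (∀ n : ℕ, satG a b T (brk b T n) = 0) ∧
    (∀ n : ℕ, 1 ≤ n → Odd n →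
      IsGreatest (satG a b T '' Set.Icc (brk b T (n - 1)) (brk b T n)) (a * T * b ^ (n - 1)) ∧
      satG a b T (brk b T (n - 1) + (Real.pi / 2) * T * b ^ (n - 1)) = a * T * b ^ (n - 1)) ∧
    (∀ n : ℕ, 2 ≤ n → Even n →
      IsLeast (satG a b T '' Set.Icc (brk b T (n - 1)) (brk b T n)) (-(a * T * b ^ (n - 1))) ∧
      satG a b T (brk b T (n - 1) + (Real.pi / 2) * T * b ^ (n - 1)) = -(a * T * b ^ (n - 1))) := by
  refine ⟨fun n => (satG_brk a b T hb hT n).2, ?_, ?_⟩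
  · intro n hn ho
    obtain ⟨m, rfl⟩ : ∃ m, n = m + 1 := ⟨n - 1, by omega⟩
    simp only [Nat.add_sub_cancel]
    have he : Even m := by
      rcases Nat.even_or_odd m with h | h
      · exact h
      · exact absurd ho (by simpa using h.add_one)
    have hmid := satG_mid a b T hb hT m
    rw [he.neg_one_pow, one_mul] at hmid
    refine ⟨⟨⟨_, mid_mem b T hb hT m, hmid⟩, ?_⟩, hmid⟩
    rintro _ ⟨x, hx, rfl⟩
    rw [satG_eq a b T hb hT m x hx.1 hx.2, he.neg_one_pow, one_mul]
    exact mul_le_of_le_one_right (by positivity) (Real.sin_le_one _)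
  · intro n hn ho
    obtain ⟨m, rfl⟩ : ∃ m, n = m + 1 := ⟨n - 1, by omega⟩
    simp only [Nat.add_sub_cancel]
    have he : Odd m := by
      rcases Nat.even_or_odd m with h | h
      · exact absurd ho (by simpa using h.add_one)
      · exact h
    have hmid := satG_mid a b T hb hT m
    rw [he.neg_one_pow, neg_one_mul] at hmid
    refine ⟨⟨⟨_, mid_mem b T hb hT m, hmid⟩, ?_⟩, hmid⟩
    rintro _ ⟨x, hx, rfl⟩
    rw [satG_eq a b T hb hT m x hx.1 hx.2, he.neg_one_pow, neg_one_mul, neg_mul]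
    exact neg_le_neg (mul_le_of_le_one_right (by positivity) (Real.sin_le_one _))
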